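/- Let A be a unital C*-algebra, H a complex Hilbert space, and ρ = [ρ_ij] a completely n-positive linear map from A to L(H). Suppose that each diagonal entry ρ_ii (i ∈ {1, …, n}) is a pure unital completely positive linear map from A to L(H), that the ρ_ii are pairwise unitarily equivalent (their Stinespring representations are unitarily equivalent), and that for all i ≠ j there is a unitary element u_ij ∈ A such that ρ_ij(u_ij) = I_H. Then ρ is pure, i.e., every completely n-positive θ with θ ≤ ρ satisfies θ = αρ for some α ∈ [0,1]. -/

import Mathlib

/-!
Think of a completely `n`-positive map as `θ i j a = Vᵢ* Φ(a) Vⱼ` for a representation `Φ` of `A`.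
For `ρ`, the `Vᵢ` are isometries because `ρ i i 1 = 1`, so `ρ i j u = 1` with `u` unitary forces
`Vᵢ = Φ(u) Vⱼ`: the difference `Vᵢ - Φ(u) Vⱼ` is null for the form of `ρ`. It is then null for the
form of any `θ ≤ ρ`, which gives `θ k i a = θ k j (a u)` and `θ i k a = θ j k (u* a)`
(`transport_of_le`). Hence every entry of `θ` is obtained from one diagonal entry `θ o o` by the
same formulas that give the entries of `ρ` from `ρ o o`, and purity of `ρ o o` yields
`θ = α • ρ` with a single scalar `α`.

Instead of building `Φ`, the argument uses only Gram decompositions of finitely many vectors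
`Φ(a) Vⱼ` (`IsCnP.exists_gram`). That the diagonal entry of a completely `n`-positive map is
completely positive (`IsCnP.isCP_diag`) uses that a finite sum of elements `star z * z` in the
C⋆-algebra of matrices over `L(H)` is again of this form.
-/


noncomputable section

open ContinuousLinearMap

universe u v

variable {A : Type u} [CStarAlgebra A]
variable {H : Type v} [NormedAddCommGroup H] [InnerProductSpace ℂ H] [CompleteSpace H]

/-- A map between star algebras is *completely positive* if each of its matrix
amplifications preserves positivity, where an element of a C⋆-algebra is positive
iff it is of the form `star y * y`. -/
def IsCP {R S : Type*} [NonUnitalSemiring R] [StarRing R]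
    [NonUnitalSemiring S] [StarRing S] (φ : R → S) : Prop :=
  ∀ (m : ℕ) (x : Matrix (Fin m) (Fin m) R),
    (∃ y : Matrix (Fin m) (Fin m) R, x = star y * y) →
    ∃ z : Matrix (Fin m) (Fin m) S, x.map φ = star z * z

/-- The map `Mₙ(A) → Mₙ(L(H))` induced by an `n × n` matrix of maps,
`[a_ij] ↦ [ρ_ij (a_ij)]`. -/
def matApply {n : ℕ} (ρ : Fin n → Fin n → (A →L[ℂ] (H →L[ℂ] H)))
    (x : Matrix (Fin n) (Fin n) A) : Matrix (Fin n) (Fin n) (H →L[ℂ] H) :=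
  Matrix.of fun i j => ρ i j (x i j)

/-- An `n × n` matrix of continuous linear maps from `A` to `L(H)` is a
*completely `n`-positive linear map* if the induced map `Mₙ(A) → Mₙ(L(H))` is
completely positive. -/
def IsCnP {n : ℕ} (ρ : Fin n → Fin n → (A →L[ℂ] (H →L[ℂ] H))) : Prop :=
  IsCP (matApply ρ)

/-- `(Φ, K, V)` is a Stinespring representation of the completely positive map
`ρ₀ : A → L(H)`. -/
def IsStinespringRep1 (ρ₀ : A →L[ℂ] (H →L[ℂ] H))
    {K : Type*} [NormedAddCommGroup K] [InnerProductSpace ℂ K] [CompleteSpace K]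
    (Φ : A →⋆ₙₐ[ℂ] (K →L[ℂ] K)) (V : H →L[ℂ] K) : Prop :=
  Continuous (⇑Φ) ∧
  (∀ a : A, ρ₀ a = (adjoint V).comp ((Φ a).comp V)) ∧
  Dense ((Submodule.span ℂ
    {x : K | ∃ (a : A) (ξ : H), x = Φ a (V ξ)} : Submodule ℂ K) : Set K)

/-- A completely `n`-positive map `ρ` is *pure* if every completely `n`-positive
`θ` with `θ ≤ ρ` is of the form `θ = α • ρ` for some `α ∈ [0,1]`. -/
def IsPureCnP {n : ℕ} (ρ : Fin n → Fin n → (A →L[ℂ] (H →L[ℂ] H))) : Prop :=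
  ∀ θ : Fin n → Fin n → (A →L[ℂ] (H →L[ℂ] H)), IsCnP θ →
    IsCnP (fun i j => ρ i j - θ i j) →
    ∃ α : ℝ, 0 ≤ α ∧ α ≤ 1 ∧ ∀ i j, θ i j = (α : ℂ) • ρ i j

/-- A completely positive map `ρ₀ : A → L(H)` is *pure* if every completely
positive `θ₀` with `ρ₀ - θ₀` completely positive is of the form `θ₀ = α • ρ₀`
for some `α ∈ [0,1]`. -/
def IsPureCP (ρ₀ : A →L[ℂ] (H →L[ℂ] H)) : Prop :=
  ∀ θ₀ : A →L[ℂ] (H →L[ℂ] H), IsCP (⇑θ₀) → IsCP (⇑(ρ₀ - θ₀)) →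
    ∃ α : ℝ, 0 ≤ α ∧ α ≤ 1 ∧ θ₀ = (α : ℂ) • ρ₀

/-- Two completely positive maps from `A` to `L(H)` are *unitarily equivalent* if,
given any Stinespring representations of the two maps, there is a unitary between
the representation spaces intertwining the representations and carrying one `V`
to the other. -/
def UnitarilyEquiv (ρ₀ σ₀ : A →L[ℂ] (H →L[ℂ] H)) : Prop :=
  ∀ {K K' : Type (max u v)}
    [NormedAddCommGroup K] [InnerProductSpace ℂ K] [CompleteSpace K]
    [NormedAddCommGroup K'] [InnerProductSpace ℂ K'] [CompleteSpace K']
    (Φ : A →⋆ₙₐ[ℂ] (K →L[ℂ] K)) (V : H →L[ℂ] K)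
    (Φ' : A →⋆ₙₐ[ℂ] (K' →L[ℂ] K')) (V' : H →L[ℂ] K'),
    IsStinespringRep1 ρ₀ Φ V → IsStinespringRep1 σ₀ Φ' V' →
    ∃ U : K ≃ₗᵢ[ℂ] K', (∀ (a : A) (x : K), U (Φ a x) = Φ' a (U x)) ∧
      ∀ ξ : H, U (V ξ) = V' ξ


lemma matApply_single {n : ℕ} (θ : Fin n → Fin n → (A →L[ℂ] (H →L[ℂ] H)))
    (i j : Fin n) (a : A) :
    matApply θ (Matrix.single i j a) = Matrix.single i j (θ i j a) := by
  ext1 p q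
  by_cases h : i = p ∧ j = q
  · obtain ⟨rfl, rfl⟩ := h
    simp [matApply]
  · simp [matApply, Matrix.single_apply, h]

/-- Gram decomposition: for finitely many `a k : A` placed at indices `j k`, the operators
`θ (j k) (j l) (star (a k) * a l)` have the form `∑ q, star (w q k) * w q l`. This is what a Stinespring
representation of `θ` gives for the finitely many vectors `Φ(a k) V (j k)`. -/
lemma IsCnP.exists_gram {n : ℕ} {θ : Fin n → Fin n → (A →L[ℂ] (H →L[ℂ] H))} (hθ : IsCnP θ)
    {m : ℕ} (j : Fin (m + 1) → Fin n) (a : Fin (m + 1) → A) :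
    ∃ w : Fin (m + 1) × Fin n → Fin (m + 1) → (H →L[ℂ] H),
      ∀ k l, θ (j k) (j l) (star (a k) * a l) = ∑ q, star (w q k) * w q l := by
  -- The matrix whose only nonzero row consists of the `a l` at position `(j 0, j l)`.
  let y : Matrix (Fin (m + 1)) (Fin (m + 1)) (Matrix (Fin n) (Fin n) A) :=
    Matrix.of fun p l => if p = 0 then Matrix.single (j 0) (j l) (a l) else 0
  obtain ⟨z, hz⟩ := hθ (m + 1) (star y * y) ⟨y, rfl⟩
  refine ⟨fun q l => z q.1 l q.2 (j l), fun k l => ?_⟩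
  have hy : (star y * y) k l = Matrix.single (j k) (j l) (star (a k) * a l) := by
    simp [Matrix.mul_apply, y, Matrix.star_eq_conjTranspose]
  have h := congrFun (congrFun (congrFun (congrFun hz k) l) (j k)) (j l)
  rw [Matrix.map_apply, hy, matApply_single, Matrix.single_apply_same] at h
  rw [h, Matrix.mul_apply, Matrix.sum_apply, Fintype.sum_prod_type]
  simp [Matrix.mul_apply, Matrix.star_apply]

/-- `CStarAlgebra.nonneg_iff_eq_star_mul_self` in an abstract C⋆-algebra; for `CStarMatrix` the
functional calculus instances of that lemma are only found through this detour. -/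
lemma exists_eq_star_mul_self {C : Type*} [CStarAlgebra C] [PartialOrder C] [StarOrderedRing C]
    {a : C} (h : 0 ≤ a) : ∃ w, a = star w * w :=
  CStarAlgebra.nonneg_iff_eq_star_mul_self.mp h

/-- In the C⋆-algebra of matrices over `L(H)`, finite sums of elements `star z * z` are of the
same form. -/
lemma exists_star_mul_self_eq_sum {m : ℕ} {ι : Type*} (s : Finset ι)
    (z : ι → Matrix (Fin m) (Fin m) (H →L[ℂ] H)) :
    ∃ w : Matrix (Fin m) (Fin m) (H →L[ℂ] H), ∑ q ∈ s, star (z q) * z q = star w * w := by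
  let z' : ι → CStarMatrix (Fin m) (Fin m) (H →L[ℂ] H) := z
  have h : 0 ≤ ∑ q ∈ s, star (z' q) * z' q :=
    Finset.sum_nonneg fun q _ => star_mul_self_nonneg (z' q)
  obtain ⟨w, hw⟩ := exists_eq_star_mul_self h
  exact ⟨w, hw⟩

lemma IsCnP.isCP_diag {n : ℕ} {θ : Fin n → Fin n → (A →L[ℂ] (H →L[ℂ] H))} (hθ : IsCnP θ)
    (i : Fin n) : IsCP (⇑(θ i i)) := by
  rintro m x ⟨y, rfl⟩
  -- Amplify along the corner embedding `a ↦ a ⊗ Eᵢᵢ`.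
  let Y : Matrix (Fin m) (Fin m) (Matrix (Fin n) (Fin n) A) := y.map (Matrix.single i i)
  obtain ⟨z, hz⟩ := hθ m (star Y * Y) ⟨Y, rfl⟩
  obtain ⟨w, hw⟩ := exists_star_mul_self_eq_sum Finset.univ
    fun q : Fin n => (Matrix.of fun p l => z p l q i : Matrix (Fin m) (Fin m) (H →L[ℂ] H))
  refine ⟨w, hw ▸ ?_⟩
  ext1 k l
  have hY : (star Y * Y) k l = Matrix.single i i ((star y * y) k l) := by
    simp only [Matrix.mul_apply, Y, Matrix.map_apply,
      Matrix.star_eq_conjTranspose, Matrix.conjTranspose_single, Matrix.conjTranspose_apply,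
      Matrix.single_mul_single_same]
    exact (map_sum (Matrix.singleAddMonoidHom i i : A →+ Matrix (Fin n) (Fin n) A) _ _).symm
  have h := congrFun (congrFun (congrFun (congrFun hz k) l) i) i
  rw [Matrix.map_apply, hY, matApply_single, Matrix.single_apply_same] at h
  rw [Matrix.map_apply, h, Matrix.mul_apply, Matrix.sum_apply, Matrix.sum_apply]
  simp only [Matrix.mul_apply, Matrix.star_apply]
  exact Finset.sum_comm

/-- The value `(Vᵢ - Φ(u) Vⱼ)* (Vᵢ - Φ(u) Vⱼ)` of the form of `θ`, written through the entries
of `θ`. -/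
def defect {n : ℕ} (θ : Fin n → Fin n → (A →L[ℂ] (H →L[ℂ] H))) (i j : Fin n) (u : A) :
    H →L[ℂ] H :=
  θ i i 1 + θ j j (star u * u) - θ i j u - θ j i (star u)

lemma IsCnP.apply_star {n : ℕ} {θ : Fin n → Fin n → (A →L[ℂ] (H →L[ℂ] H))} (hθ : IsCnP θ)
    (i j : Fin n) (u : A) : θ j i (star u) = star (θ i j u) := by
  obtain ⟨w, hw⟩ := hθ.exists_gram ![i, j] ![1, u]
  have h₁ := hw 0 1
  have h₂ := hw 1 0
  simp only [Matrix.cons_val_zero, Matrix.cons_val_one, star_one, one_mul, mul_one] at h₁ h₂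
  rw [h₁, h₂]
  simp

/-- Gram vectors of `Vᵢ`, `Φ(u) Vⱼ` and `Φ(a) Vₖ`. -/
lemma IsCnP.exists_gram_defect {n : ℕ} {θ : Fin n → Fin n → (A →L[ℂ] (H →L[ℂ] H))}
    (hθ : IsCnP θ) (i j k : Fin n) (u a : A) :
    ∃ w : Fin 3 × Fin n → Fin 3 → (H →L[ℂ] H),
      defect θ i j u = ∑ q, star (w q 0 - w q 1) * (w q 0 - w q 1) ∧
      θ i k a = ∑ q, star (w q 0) * w q 2 ∧
      θ j k (star u * a) = ∑ q, star (w q 1) * w q 2 ∧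
      θ k i (star a) = ∑ q, star (w q 2) * w q 0 ∧
      θ k j (star a * u) = ∑ q, star (w q 2) * w q 1 := by
  obtain ⟨w, hw⟩ := hθ.exists_gram ![i, j, k] ![1, u, a]
  refine ⟨w, ?_, by simpa using hw 0 2, by simpa using hw 1 2, by simpa using hw 2 0,
    by simpa using hw 2 1⟩
  have h₀ : θ i i 1 = ∑ q, star (w q 0) * w q 0 := by simpa using hw 0 0
  have h₁ : θ j j (star u * u) = ∑ q, star (w q 1) * w q 1 := by simpa using hw 1 1
  have h₂ : θ i j u = ∑ q, star (w q 0) * w q 1 := by simpa using hw 0 1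
  have h₃ : θ j i (star u) = ∑ q, star (w q 1) * w q 0 := by simpa using hw 1 0
  rw [defect, h₀, h₁, h₂, h₃, ← Finset.sum_add_distrib, ← Finset.sum_sub_distrib,
    ← Finset.sum_sub_distrib]
  refine Finset.sum_congr rfl fun q _ => ?_
  rw [star_sub]
  noncomm_ring

lemma IsCnP.defect_nonneg {n : ℕ} {θ : Fin n → Fin n → (A →L[ℂ] (H →L[ℂ] H))}
    (hθ : IsCnP θ) (i j : Fin n) (u : A) : 0 ≤ defect θ i j u := by
  obtain ⟨w, hw, -⟩ := hθ.exists_gram_defect i j i u 1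
  rw [hw]
  exact Finset.sum_nonneg fun q _ => star_mul_self_nonneg _

/-- If `Vᵢ - Φ(u) Vⱼ` is null for `θ`, then `Vᵢ` can be replaced by `Φ(u) Vⱼ` in all entries
of `θ`. -/
lemma IsCnP.transport {n : ℕ} {θ : Fin n → Fin n → (A →L[ℂ] (H →L[ℂ] H))} (hθ : IsCnP θ)
    {i j : Fin n} {u : A} (h : defect θ i j u = 0) (k : Fin n) (a : A) :
    θ i k a = θ j k (star u * a) ∧ θ k i a = θ k j (a * u) := by
  have key : ∀ b : A, θ i k b = θ j k (star u * b) ∧ θ k i (star b) = θ k j (star b * u) := by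
    intro b
    obtain ⟨w, hw, h₁, h₂, h₃, h₄⟩ := hθ.exists_gram_defect i j k u b
    rw [h, eq_comm, Finset.sum_eq_zero_iff_of_nonneg fun q _ => star_mul_self_nonneg _] at hw
    have hw' : ∀ q, w q 0 = w q 1 := fun q =>
      sub_eq_zero.mp (CStarRing.star_mul_self_eq_zero_iff _ |>.mp (hw q (Finset.mem_univ q)))
    rw [h₁, h₂, h₃, h₄]
    simp [hw']
  exact ⟨(key a).1, by simpa using (key (star a)).2⟩

/-- If the diagonal entries of `ρ` are unital and `ρ i j u = 1` for a unitary `u`, then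
`Vᵢ - Φ(u) Vⱼ` is null for `ρ`, hence for every completely `n`-positive `θ ≤ ρ`. -/
lemma transport_of_le {n : ℕ} {ρ θ : Fin n → Fin n → (A →L[ℂ] (H →L[ℂ] H))} (hρ : IsCnP ρ)
    (hunital : ∀ i, ρ i i 1 = 1) (hθ : IsCnP θ) (hle : IsCnP (fun i j => ρ i j - θ i j))
    {i j : Fin n} {u : A} (hu : u ∈ unitary A) (hij : ρ i j u = 1) (k : Fin n) (a : A) :
    (θ i k a = θ j k (star u * a) ∧ θ k i a = θ k j (a * u)) ∧
      (ρ i k a = ρ j k (star u * a) ∧ ρ k i a = ρ k j (a * u)) := by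
  have hρ₀ : defect ρ i j u = 0 := by
    rw [defect, hρ.apply_star, hij, Unitary.star_mul_self_of_mem hu, hunital, hunital]
    simp
  have hsub : defect (fun i j => ρ i j - θ i j) i j u = defect ρ i j u - defect θ i j u := by
    simp only [defect, sub_apply]
    abel
  have hθ₀ : defect θ i j u = 0 := by
    refine le_antisymm ?_ (hθ.defect_nonneg i j u)
    have := hle.defect_nonneg i j u
    rwa [hsub, hρ₀, zero_sub, neg_nonneg] at this
  exact ⟨hθ.transport hθ₀ k a, hρ.transport hρ₀ k a⟩

/-- If the diagonal entries of a completely `n`-positive map `ρ` are pairwise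
unitarily equivalent pure unital completely positive maps, and for all `i ≠ j`
there is a unitary `u_ij ∈ A` with `ρ_ij(u_ij) = I_H`, then `ρ` is pure. -/
theorem statement14 {n : ℕ} (ρ : Fin n → Fin n → (A →L[ℂ] (H →L[ℂ] H)))
    (hρ : IsCnP ρ)
    (hcp : ∀ i, IsCP (⇑(ρ i i)))
    (hunital : ∀ i, ρ i i 1 = 1)
    (hpure : ∀ i, IsPureCP (ρ i i))
    (hequiv : ∀ i j, i ≠ j → UnitarilyEquiv (ρ i i) (ρ j j))
    (huij : ∀ i j, i ≠ j → ∃ u ∈ unitary A, ρ i j u = 1) :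
    IsPureCnP ρ := by
  intro θ hθ hle
  rcases n with _ | n
  · exact ⟨0, le_rfl, zero_le_one, fun i => i.elim0⟩
  obtain ⟨α, h0, h1, hα⟩ := hpure 0 (θ 0 0) (hθ.isCP_diag 0) (hle.isCP_diag 0)
  -- The first column is determined by the corner entry, and each row by its first entry.
  have hcol : ∀ i, θ i 0 = (α : ℂ) • ρ i 0 := by
    intro i
    by_cases hi : i = 0
    · rw [hi, hα]
    obtain ⟨u, hu, hiu⟩ := huij i 0 hi
    ext1 a
    obtain ⟨⟨e₁, -⟩, ⟨e₂, -⟩⟩ := transport_of_le hρ hunital hθ hle hu hiu 0 a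
    rw [smul_apply, e₁, e₂, hα, smul_apply]
  refine ⟨α, h0, h1, fun i j => ?_⟩
  by_cases hj : j = 0
  · rw [hj, hcol]
  obtain ⟨u, hu, hju⟩ := huij j 0 hj
  ext1 a
  obtain ⟨⟨-, e₁⟩, ⟨-, e₂⟩⟩ := transport_of_le hρ hunital hθ hle hu hju i a
  rw [smul_apply, e₁, e₂, hcol, smul_apply]
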